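/- Let G=(V,E) be a Bonnet-Myers sharp graph of diameter 2, let x,y∈V with x∼y, and let p∈[1/(max(d_x,d_y)+1), 1]. Then W₁(μ_x^p, μ_y^p) ≤ p. -/

import Mathlib

open scoped Classical
open Finset

noncomputable section

/-- The degree of a vertex `x` in the graph `G`. -/
def deg {V : Type*} [Fintype V] (G : SimpleGraph V) (x : V) : ℕ :=
  (Finset.univ.filter (fun y => G.Adj x y)).card

/-- The diameter of `G`: the maximum of the combinatorial distance over all pairs of vertices. -/
def diam {V : Type*} [Fintype V] (G : SimpleGraph V) : ℕ :=
  Finset.univ.sup (fun xy : V × V => G.dist xy.1 xy.2)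

/-- The probability measure `μ_x^p` of the lazy simple random walk at `x` with idleness `p`. -/
def mu {V : Type*} [Fintype V] (G : SimpleGraph V) (p : ℝ) (x : V) : V → ℝ :=
  fun z => if z = x then p else if G.Adj x z then (1 - p) / (deg G x : ℝ) else 0

/-- The Wasserstein distance `W₁(μ₁, μ₂)` with respect to the combinatorial distance of `G`:
the infimum of the total transport cost over all transport plans from `μ₁` to `μ₂`. -/
def W1 {V : Type*} [Fintype V] (G : SimpleGraph V) (μ₁ μ₂ : V → ℝ) : ℝ :=
  sInf {c : ℝ | ∃ π : V → V → ℝ,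
    (∀ x y, 0 ≤ π x y ∧ π x y ≤ 1) ∧
    (∀ x, ∑ y, π x y = μ₁ x) ∧
    (∀ y, ∑ x, π x y = μ₂ y) ∧
    c = ∑ x, ∑ y, (G.dist x y : ℝ) * π x y}

/-- The `p`-Ollivier-Ricci curvature `κ_p(x,y) = 1 - W₁(μ_x^p, μ_y^p)`. -/
def kappa {V : Type*} [Fintype V] (G : SimpleGraph V) (p : ℝ) (x y : V) : ℝ :=
  1 - W1 G (mu G p x) (mu G p y)

/-- The Lin-Lu-Yau curvature `κ_LLY(x,y) = lim_{p→1} κ_p(x,y)/(1-p)`. -/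
def kappaLLY {V : Type*} [Fintype V] (G : SimpleGraph V) (x y : V) : ℝ :=
  Filter.limUnder (nhdsWithin 1 (Set.Iio 1)) (fun p => kappa G p x y / (1 - p))

/-- `G` is Bonnet-Myers sharp if the infimum of `κ_LLY` over the edges equals `2/diam(G)`. -/
def BMSharp {V : Type*} [Fintype V] (G : SimpleGraph V) : Prop :=
  sInf {r : ℝ | ∃ x y, G.Adj x y ∧ r = kappaLLY G x y} = 2 / (diam G : ℝ)

/-- `G` is obtained from the complete graph on its vertex set by deleting a matching
(a set of pairwise disjoint edges, encoded as a symmetric irreflexive relation in which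
every vertex has at most one partner). -/
def IsMatchingDeletionOfComplete {V : Type*} (G : SimpleGraph V) : Prop :=
  ∃ M : V → V → Prop, Symmetric M ∧ (∀ x, ¬ M x x) ∧
    (∀ x y z, M x y → M x z → y = z) ∧
    (∀ x y, G.Adj x y ↔ x ≠ y ∧ ¬ M x y)

/-- The graph `G(a,b)` on `2a+b` vertices `u_1, …, u_{2a}, v_1, …, v_b` (encoded as
`Fin (2a+b)`, with `u_i` the index `i-1` and `v_j` the index `2a+j-1`), in which two distinct
vertices are adjacent unless they form a pair `{u_{2i-1}, u_{2i}}`, i.e. `G(a,b)` is the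
complete graph `K_{2a+b}` with a matching of size `a` deleted. -/
def Gab (a b : ℕ) : SimpleGraph (Fin (2*a+b)) where
  Adj x y := x ≠ y ∧ ¬((x : ℕ) < 2*a ∧ (y : ℕ) < 2*a ∧ (x : ℕ)/2 = (y : ℕ)/2)
  symm := by
    constructor
    intro x y h
    exact ⟨h.1.symm, fun hc => h.2 ⟨hc.2.1, hc.1, hc.2.2.symm⟩⟩
  loopless := by constructor; intro x h; exact h.1 rfl

/-- The antitree `AT(a_1, …, a_N)` on the disjoint union of sets `V_1, …, V_N` with
`|V_k| = a_k` (0-indexed here: `V_k` is `Fin (a k)` for `k : Fin N`): two distinct vertices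
are adjacent iff they lie in the same set or in consecutive sets. -/
def antitree (N : ℕ) (a : Fin N → ℕ) : SimpleGraph (Σ k : Fin N, Fin (a k)) where
  Adj x y := x ≠ y ∧
    ((x.1 : ℕ) = (y.1 : ℕ) ∨ (x.1 : ℕ) + 1 = (y.1 : ℕ) ∨ (y.1 : ℕ) + 1 = (x.1 : ℕ))
  symm := by
    constructor
    intro x y h
    refine ⟨h.1.symm, ?_⟩
    rcases h.2 with h2 | h2 | h2
    · exact Or.inl h2.symm
    · exact Or.inr (Or.inr h2)
    · exact Or.inr (Or.inl h2)
  loopless := by constructor; intro x h; exact h.1 rfl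

/-
In a Bonnet-Myers sharp graph of diameter 2 every edge has `κ_LLY ≥ 1`, so it is enough to know that
`κ_p(x,y) = (1 - p) κ_LLY(x,y)` for all `p ≥ 1 / (max(d_x,d_y) + 1)`, that is, that `κ_p / (1 - p)`
is constant there. Let `q = t + (1 - t) p` with `0 ≤ t ≤ 1`, so that
`μ_x^q = t δ_x + (1 - t) μ_x^p`. Sending mass `t` along the edge gives
`W₁(q) ≤ t + (1 - t) W₁(p)`. Conversely, say `d_y ≤ d_x`, and among the optimal plans for `q` take
one that maximises the mass sent from `x` to `y` plus the mass at rest outside `{x, y}`. If it sent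
less than `t` from `x` to `y`, then, as the lower bound on `p` limits the mass already at `y`, some
neighbour `a ≠ y` of `x` would send mass to `y`. Common neighbours of `x` and `y` have no surplus,
because `d_y ≤ d_x`, so `d(a,y) = 2`; sending some mass from `x` to `y`, and as much from `a` to
where the mass of `x` went before, costs no more and contradicts maximality. Hence mass `t` can be
taken off the edge, which leaves a plan for `p` scaled by `1 - t`.
-/

section Transport

variable {α β : Type*} [Fintype α] [Fintype β]

/-- `π` is a transport plan (coupling) from `μ` to `ν`. The bound `π ≤ 1` required in `W1` is left
out, since it follows from `μ ≤ 1`. -/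
structure IsTransportPlan (μ : α → ℝ) (ν : β → ℝ) (π : α → β → ℝ) : Prop where
  nonneg : ∀ a b, 0 ≤ π a b
  sum_right : ∀ a, ∑ b, π a b = μ a
  sum_left : ∀ b, ∑ a, π a b = ν b

/-- The total cost `∑ c(a,b) π(a,b)` of a plan `π` for the cost function `c`, as a linear
functional of `π`. -/
def transportCost (c : α → β → ℝ) : (α → β → ℝ) →ₗ[ℝ] ℝ where
  toFun π := ∑ a, ∑ b, c a b * π a b
  map_add' π σ := by simp only [Pi.add_apply, mul_add, sum_add_distrib]
  map_smul' r π := by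
    simp only [Pi.smul_apply, smul_eq_mul, mul_left_comm, ← mul_sum, RingHom.id_apply]

lemma transportCost_apply (c π : α → β → ℝ) :
    transportCost c π = ∑ a, ∑ b, c a b * π a b := rfl

lemma transportCost_nonneg {c π : α → β → ℝ} (hc : ∀ a b, 0 ≤ c a b) (hπ : ∀ a b, 0 ≤ π a b) :
    0 ≤ transportCost c π :=
  sum_nonneg fun a _ => sum_nonneg fun b _ => mul_nonneg (hc a b) (hπ a b)

lemma transportCost_single (c : α → β → ℝ) (x : α) (y : β) :
    transportCost c (Pi.single x (Pi.single y 1)) = c x y := by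
  rw [transportCost_apply, Fintype.sum_eq_single x fun a ha => by simp [ha]]
  simp [Pi.single_apply]

lemma isTransportPlan_single (x : α) (y : β) :
    IsTransportPlan (Pi.single x 1) (Pi.single y 1) (Pi.single x (Pi.single y 1)) where
  nonneg a b := (Pi.single_nonneg.2 (Pi.single_nonneg.2 zero_le_one) :
    (0 : α → β → ℝ) ≤ Pi.single x (Pi.single y 1)) a b
  sum_right a := by by_cases h : a = x <;> simp [Pi.single_apply, h]
  sum_left b := by
    rw [Fintype.sum_eq_single x fun a ha => by simp [ha], Pi.single_eq_same]

lemma isTransportPlan_mul {μ : α → ℝ} {ν : β → ℝ} (hμ : ∀ a, 0 ≤ μ a) (hν : ∀ b, 0 ≤ ν b)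
    (hμ1 : ∑ a, μ a = 1) (hν1 : ∑ b, ν b = 1) :
    IsTransportPlan μ ν fun a b => μ a * ν b where
  nonneg a b := mul_nonneg (hμ a) (hν b)
  sum_right a := by rw [← mul_sum, hν1, mul_one]
  sum_left b := by rw [← sum_mul, hμ1, one_mul]

namespace IsTransportPlan

variable {μ μ' : α → ℝ} {ν ν' : β → ℝ} {π σ : α → β → ℝ}

lemma le_source (h : IsTransportPlan μ ν π) (a : α) (b : β) : π a b ≤ μ a :=
  h.sum_right a ▸ single_le_sum (fun j _ => h.nonneg a j) (mem_univ b)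

lemma add (h : IsTransportPlan μ ν π) (h' : IsTransportPlan μ' ν' σ) :
    IsTransportPlan (μ + μ') (ν + ν') (π + σ) where
  nonneg a b := add_nonneg (h.nonneg a b) (h'.nonneg a b)
  sum_right a := by simp [sum_add_distrib, h.sum_right, h'.sum_right]
  sum_left b := by simp [sum_add_distrib, h.sum_left, h'.sum_left]

lemma sub (h : IsTransportPlan μ ν π) (h' : IsTransportPlan μ' ν' σ) (hle : σ ≤ π) :
    IsTransportPlan (μ - μ') (ν - ν') (π - σ) where
  nonneg a b := sub_nonneg.2 (hle a b)
  sum_right a := by simp [sum_sub_distrib, h.sum_right, h'.sum_right]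
  sum_left b := by simp [sum_sub_distrib, h.sum_left, h'.sum_left]

lemma smul (h : IsTransportPlan μ ν π) {r : ℝ} (hr : 0 ≤ r) :
    IsTransportPlan (r • μ) (r • ν) (r • π) where
  nonneg a b := mul_nonneg hr (h.nonneg a b)
  sum_right a := by simp [← mul_sum, h.sum_right]
  sum_left b := by simp [← mul_sum, h.sum_left]

end IsTransportPlan

lemma isCompact_setOf_isTransportPlan (μ : α → ℝ) (ν : β → ℝ) :
    IsCompact {π | IsTransportPlan μ ν π} := by
  have hset : {π | IsTransportPlan μ ν π} = Set.Icc 0 (fun a _ => μ a) ∩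
      ({π | ∀ a, ∑ b, π a b = μ a} ∩ {π | ∀ b, ∑ a, π a b = ν b}) :=
    Set.ext fun π => ⟨fun h => ⟨⟨h.nonneg, h.le_source⟩, h.sum_right, h.sum_left⟩,
      fun h => ⟨h.1.1, h.2.1, h.2.2⟩⟩
  rw [hset]
  refine isCompact_Icc.inter_right (.inter ?_ ?_) <;>
  · simp only [Set.ofPred_forall]
    exact isClosed_iInter fun _ => isClosed_eq (by fun_prop) continuous_const

/-- `π` minimises the cost `c` among all plans from `μ` to `ν` and maximises the secondary
objective `w` among the minimisers of `c`. The secondary objective breaks ties in exchange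
arguments. -/
structure IsLexOptimal (c w : α → β → ℝ) (μ : α → ℝ) (ν : β → ℝ) (π : α → β → ℝ) : Prop
    extends IsTransportPlan μ ν π where
  cost_le : ∀ σ, IsTransportPlan μ ν σ → transportCost c π ≤ transportCost c σ
  weight_le : ∀ σ, IsTransportPlan μ ν σ → transportCost c σ ≤ transportCost c π →
    transportCost w σ ≤ transportCost w π

lemma IsTransportPlan.exists_isLexOptimal {μ : α → ℝ} {ν : β → ℝ} {π₀ : α → β → ℝ}
    (h₀ : IsTransportPlan μ ν π₀) (c w : α → β → ℝ) : ∃ π, IsLexOptimal c w μ ν π := by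
  have hcont (f : α → β → ℝ) : Continuous (transportCost f) :=
    (transportCost f).continuous_of_finiteDimensional
  have hK := isCompact_setOf_isTransportPlan μ ν
  obtain ⟨ρ, hρ, hmin⟩ := hK.exists_isMinOn ⟨π₀, h₀⟩ (hcont c).continuousOn
  obtain ⟨π, ⟨hπ, hπρ⟩, hmax⟩ :=
    (hK.inter_right (isClosed_le (hcont c) continuous_const)).exists_isMaxOn
      ⟨ρ, hρ, le_refl (transportCost c ρ)⟩ (hcont w).continuousOn
  exact ⟨π, hπ, fun σ hσ => le_trans hπρ (hmin hσ), fun σ hσ hle => hmax ⟨hσ, hle.trans hπρ⟩⟩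

/-- The signed plan `δ₍u,v₎ + δ₍a,b₎ - δ₍a,v₎ - δ₍u,b₎`, written as `(δ_u - δ_a) ⊗ (δ_v - δ_b)`;
adding a multiple of it to a plan exchanges the targets of mass sent by `a` and `u`. -/
def exchange (u a : α) (v b : β) : α → β → ℝ := fun i j =>
  (Pi.single u 1 - Pi.single a 1 : α → ℝ) i * (Pi.single v 1 - Pi.single b 1 : β → ℝ) j

lemma transportCost_exchange (c : α → β → ℝ) (u a : α) (v b : β) :
    transportCost c (exchange u a v b) = c u v + c a b - (c a v + c u b) := by
  simp only [transportCost_apply, exchange, Pi.sub_apply, Pi.single_apply, mul_sub,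
    sum_sub_distrib, mul_ite, mul_one, mul_zero, sum_ite_eq', mem_univ, if_true]
  ring

lemma IsTransportPlan.add_smul_exchange {μ : α → ℝ} {ν : β → ℝ} {π : α → β → ℝ}
    (h : IsTransportPlan μ ν π) {u a : α} {v b : β} {ε : ℝ} (hε : 0 ≤ ε)
    (hav : ε ≤ π a v) (hub : ε ≤ π u b) : IsTransportPlan μ ν (π + ε • exchange u a v b) where
  nonneg i j := by
    have hij := h.nonneg i j
    simp only [Pi.add_apply, Pi.smul_apply, smul_eq_mul, exchange, Pi.sub_apply, Pi.single_apply]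
    split_ifs <;> subst_vars <;> linarith
  sum_right i := by
    simp [exchange, sum_add_distrib, ← mul_sum, h.sum_right]
  sum_left j := by
    simp [exchange, sum_add_distrib, ← mul_sum, ← sum_mul, h.sum_left]

lemma IsLexOptimal.exchange_le {c w : α → β → ℝ} {μ : α → ℝ} {ν : β → ℝ} {π : α → β → ℝ}
    (h : IsLexOptimal c w μ ν π) {u a : α} {v b : β} (hav : 0 < π a v) (hub : 0 < π u b)
    (hc : c u v + c a b ≤ c a v + c u b) : w u v + w a b ≤ w a v + w u b := by
  have hε : 0 < min (π a v) (π u b) := lt_min hav hub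
  have hplan := h.add_smul_exchange hε.le (min_le_left _ _) (min_le_right _ _)
  have hw := h.weight_le _ hplan <| by
    rw [map_add, map_smul, transportCost_exchange, smul_eq_mul]
    nlinarith
  rw [map_add, map_smul, transportCost_exchange, smul_eq_mul] at hw
  nlinarith

end Transport

section Wasserstein

variable {V : Type*} [Fintype V] {G : SimpleGraph V} {μ ν : V → ℝ} {π : V → V → ℝ}

/-- The combinatorial distance of `G` as a real cost function, so that `W1` is the optimal
transport cost for it. -/
def distCost (G : SimpleGraph V) (a b : V) : ℝ := G.dist a b

lemma IsLexOptimal.W1_eq {w : V → V → ℝ} (h : IsLexOptimal (distCost G) w μ ν π)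
    (hμ : ∀ a, μ a ≤ 1) : W1 G μ ν = transportCost (distCost G) π := by
  refine IsLeast.csInf_eq ⟨⟨π, fun a b => ⟨h.nonneg a b, (h.le_source a b).trans (hμ a)⟩,
    h.sum_right, h.sum_left, rfl⟩, ?_⟩
  rintro _ ⟨σ, hσ, hσμ, hσν, rfl⟩
  exact h.cost_le σ ⟨fun a b => (hσ a b).1, hσμ, hσν⟩

lemma IsTransportPlan.W1_le (h : IsTransportPlan μ ν π) (hμ : ∀ a, μ a ≤ 1) :
    W1 G μ ν ≤ transportCost (distCost G) π := by
  obtain ⟨σ, hσ⟩ := h.exists_isLexOptimal (distCost G) 0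
  exact (hσ.W1_eq hμ).trans_le (hσ.cost_le π h)

lemma IsTransportPlan.mul_W1_le {s : ℝ} (hs : 0 ≤ s) (h : IsTransportPlan (s • μ) (s • ν) π)
    (hμ : ∀ a, μ a ≤ 1) : s * W1 G μ ν ≤ transportCost (distCost G) π := by
  rcases hs.eq_or_lt with rfl | hs
  · rw [zero_mul]
    exact transportCost_nonneg (fun _ _ => Nat.cast_nonneg _) h.nonneg
  · have hscaled := h.smul (inv_nonneg.2 hs.le)
    rw [inv_smul_smul₀ hs.ne', inv_smul_smul₀ hs.ne'] at hscaled
    have hW := hscaled.W1_le (G := G) hμ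
    rwa [map_smul, smul_eq_mul, ← div_eq_inv_mul, le_div_iff₀' hs] at hW

lemma W1_comm (G : SimpleGraph V) (μ ν : V → ℝ) : W1 G μ ν = W1 G ν μ := by
  refine congrArg sInf (Set.ext fun c => ⟨?_, ?_⟩) <;>
  · rintro ⟨π, h01, hμ, hν, rfl⟩
    refine ⟨fun a b => π b a, fun a b => h01 b a, hν, hμ, ?_⟩
    rw [sum_comm]
    simp only [G.dist_comm]

lemma kappa_comm (G : SimpleGraph V) (p : ℝ) (x y : V) : kappa G p x y = kappa G p y x := by
  rw [kappa, W1_comm, ← kappa]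

lemma kappaLLY_comm (G : SimpleGraph V) (x y : V) : kappaLLY G x y = kappaLLY G y x := by
  simp only [kappaLLY, kappa_comm G _ x y]

end Wasserstein

section RandomWalk

variable {V : Type*} [Fintype V] {G : SimpleGraph V} {p : ℝ} {x y z : V}

lemma deg_pos_of_adj (h : G.Adj x y) : 0 < deg G x :=
  card_pos.2 ⟨y, mem_filter.2 ⟨mem_univ y, h⟩⟩

lemma mu_self (G : SimpleGraph V) (p : ℝ) (x : V) : mu G p x x = p := if_pos rfl

lemma mu_of_adj (p : ℝ) (h : G.Adj x z) : mu G p x z = (1 - p) / deg G x := by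
  rw [mu, if_neg h.ne', if_pos h]

lemma mu_nonneg (h0 : 0 ≤ p) (h1 : p ≤ 1) (x z : V) : 0 ≤ mu G p x z := by
  unfold mu
  split_ifs
  exacts [h0, div_nonneg (sub_nonneg.2 h1) (Nat.cast_nonneg _), le_rfl]

lemma sum_mu (p : ℝ) (hx : 0 < deg G x) : ∑ z, mu G p x z = 1 := by
  have hdeg : (deg G x : ℝ) ≠ 0 := by positivity
  have hsplit (z : V) : mu G p x z =
      (if z = x then p else 0) + if G.Adj x z then (1 - p) / (deg G x : ℝ) else 0 := by
    by_cases h : z = x <;> simp [mu, h]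
  simp only [hsplit, sum_add_distrib, sum_ite_eq', mem_univ, if_true, ← sum_filter, sum_const]
  rw [← deg, nsmul_eq_mul, mul_div_cancel₀ _ hdeg, add_sub_cancel]

lemma mu_le_one (h0 : 0 ≤ p) (h1 : p ≤ 1) (hx : 0 < deg G x) (z : V) : mu G p x z ≤ 1 :=
  sum_mu p hx ▸ single_le_sum (fun i _ => mu_nonneg h0 h1 x i) (mem_univ z)

lemma exists_isLexOptimal_mu (h0 : 0 ≤ p) (h1 : p ≤ 1) (hx : 0 < deg G x) (hy : 0 < deg G y)
    (c w : V → V → ℝ) : ∃ π, IsLexOptimal c w (mu G p x) (mu G p y) π :=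
  (isTransportPlan_mul (mu_nonneg h0 h1 x) (mu_nonneg h0 h1 y)
    (sum_mu p hx) (sum_mu p hy)).exists_isLexOptimal c w

lemma mu_lazier (G : SimpleGraph V) (p t : ℝ) (x : V) :
    mu G (t + (1 - t) * p) x = t • Pi.single x 1 + (1 - t) • mu G p x := by
  ext z
  simp only [mu, Pi.add_apply, Pi.smul_apply, Pi.single_apply, smul_eq_mul]
  split_ifs <;> ring

lemma W1_mu_lazier_le {t : ℝ} (h0 : 0 ≤ p) (h1 : p ≤ 1) (t0 : 0 ≤ t) (t1 : t ≤ 1)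
    (hxy : G.Adj x y) :
    W1 G (mu G (t + (1 - t) * p) x) (mu G (t + (1 - t) * p) y) ≤
      t + (1 - t) * W1 G (mu G p x) (mu G p y) := by
  have hx := deg_pos_of_adj hxy
  obtain ⟨π, hπ⟩ := exists_isLexOptimal_mu h0 h1 hx (deg_pos_of_adj hxy.symm) (distCost G) 0
  have hplan := ((isTransportPlan_single x y).smul t0).add
    (hπ.toIsTransportPlan.smul (sub_nonneg.2 t1))
  rw [← mu_lazier, ← mu_lazier] at hplan
  have hW := hplan.W1_le (G := G) (mu_le_one
    (add_nonneg t0 (mul_nonneg (sub_nonneg.2 t1) h0)) (by nlinarith) hx)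
  rwa [map_add, map_smul, map_smul, transportCost_single, ← hπ.W1_eq (mu_le_one h0 h1 hx),
    distCost, SimpleGraph.dist_eq_one_iff_adj.2 hxy, Nat.cast_one, smul_eq_mul, smul_eq_mul,
    mul_one] at hW

end RandomWalk

section Rerouting

variable {V : Type*} {G : SimpleGraph V} {x y : V} {π : V → V → ℝ}

/-- The secondary objective counting the mass sent from `x` to `y` together with the mass at rest
at vertices other than `x` and `y`. -/
def edgeWeight (x y a b : V) : ℝ :=
  if a = x ∧ b = y ∨ a = b ∧ a ≠ x ∧ a ≠ y then 1 else 0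

lemma edgeWeight_nonneg (x y a b : V) : 0 ≤ edgeWeight x y a b := by
  unfold edgeWeight
  positivity

variable [Fintype V]

lemma IsLexOptimal.eq_zero_of_le {μ ν : V → ℝ} (hconn : G.Connected)
    (h : IsLexOptimal (distCost G) (edgeWeight x y) μ ν π) {a b : V} (hax : a ≠ x) (hay : a ≠ y)
    (hba : b ≠ a) (hle : μ a ≤ ν a) : π a b = 0 := by
  by_contra hne
  have hab : 0 < π a b := (h.nonneg a b).lt_of_ne' hne
  have hrow : π a a < μ a := h.sum_right a ▸
    single_lt_sum hba (mem_univ a) (mem_univ b) hab fun j _ _ => h.nonneg a j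
  obtain ⟨c, hca, hpos⟩ : ∃ c ≠ a, 0 < π c a := by
    by_contra! hzero
    have hcol := h.sum_left a
    rw [Fintype.sum_eq_single a fun c hc => (hzero c hc).antisymm (h.nonneg c a)] at hcol
    linarith
  have htriangle : distCost G a a + distCost G c b ≤ distCost G c a + distCost G a b := by
    simp only [distCost, SimpleGraph.dist_self, Nat.cast_zero, zero_add]
    exact_mod_cast hconn.dist_triangle
  have hw := h.exchange_le hpos hab htriangle
  have hcb := edgeWeight_nonneg x y c b
  have haa : edgeWeight x y a a = 1 := if_pos (.inr ⟨rfl, hax, hay⟩)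
  have hca' : edgeWeight x y c a = 0 := if_neg (by tauto)
  have hab' : edgeWeight x y a b = 0 := if_neg (by tauto)
  linarith

lemma IsLexOptimal.adj_and_not_adj_of_pos {q : ℝ} (hconn : G.Connected) (hq : q ≤ 1)
    (hy : 0 < deg G y) (hdeg : deg G y ≤ deg G x)
    (h : IsLexOptimal (distCost G) (edgeWeight x y) (mu G q x) (mu G q y) π)
    {a : V} (hax : a ≠ x) (hay : a ≠ y) (hpos : 0 < π a y) : G.Adj x a ∧ ¬ G.Adj y a := by
  have hxa : G.Adj x a := by
    by_contra hna
    have hle := h.le_source a y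
    rw [mu, if_neg hax, if_neg hna] at hle
    linarith
  refine ⟨hxa, fun hya => hpos.ne' (h.eq_zero_of_le hconn hax hay hay.symm ?_)⟩
  rw [mu_of_adj q hxa, mu_of_adj q hya]
  exact div_le_div_of_nonneg_left (sub_nonneg.2 hq) (mod_cast hy) (mod_cast hdeg)

lemma IsLexOptimal.le_apply_of_adj {q t : ℝ} (hconn : G.Connected) (hxy : G.Adj x y)
    (hdeg : deg G y ≤ deg G x) (hq : q ≤ 1) (hqt : (1 - q) / deg G x ≤ q - t)
    (h : IsLexOptimal (distCost G) (edgeWeight x y) (mu G q x) (mu G q y) π) : t ≤ π x y := by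
  by_contra! hlt
  have hyy : π y y ≤ (1 - q) / deg G x := mu_of_adj q hxy ▸ h.le_source y y
  obtain ⟨a, ⟨hax, hay⟩, hapos⟩ : ∃ a, (a ≠ x ∧ a ≠ y) ∧ 0 < π a y := by
    by_contra! hzero
    have hcol := h.sum_left y
    rw [mu_self, Fintype.sum_eq_add x y hxy.ne
      fun a ha => (hzero a ha).antisymm (h.nonneg a y)] at hcol
    linarith
  obtain ⟨b, hby, hbpos⟩ : ∃ b ≠ y, 0 < π x b := by
    by_contra! hzero
    have hrow := h.sum_right x
    rw [mu_self, Fintype.sum_eq_single y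
      fun b hb => (hzero b hb).antisymm (h.nonneg x b)] at hrow
    linarith [h.nonneg y y]
  obtain ⟨hxa, hya⟩ :=
    h.adj_and_not_adj_of_pos hconn hq (deg_pos_of_adj hxy.symm) hdeg hax hay hapos
  have hdist : distCost G x y + distCost G a b ≤ distCost G a y + distCost G x b := by
    have hxy1 : G.dist x y = 1 := SimpleGraph.dist_eq_one_iff_adj.2 hxy
    have hax1 : G.dist a x = 1 := SimpleGraph.dist_eq_one_iff_adj.2 hxa.symm
    have hay0 : G.dist a y ≠ 0 := mt hconn.dist_eq_zero_iff.1 hay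
    have hay1 : G.dist a y ≠ 1 := fun e => hya (SimpleGraph.dist_eq_one_iff_adj.1 e).symm
    have htriangle : G.dist a b ≤ G.dist a x + G.dist x b := hconn.dist_triangle
    unfold distCost
    exact_mod_cast (by lia : G.dist x y + G.dist a b ≤ G.dist a y + G.dist x b)
  have hw := h.exchange_le hapos hbpos hdist
  have hab := edgeWeight_nonneg x y a b
  have hxy' : edgeWeight x y x y = 1 := if_pos (.inl ⟨rfl, rfl⟩)
  have hay' : edgeWeight x y a y = 0 := if_neg (by tauto)
  have hxb' : edgeWeight x y x b = 0 := if_neg (by tauto)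
  linarith

lemma le_W1_mu_lazier {p t : ℝ} (hconn : G.Connected) (hxy : G.Adj x y)
    (hdeg : deg G y ≤ deg G x) (h1 : p ≤ 1) (hp : (1 - p) / deg G x ≤ p)
    (t0 : 0 ≤ t) (t1 : t ≤ 1) :
    t + (1 - t) * W1 G (mu G p x) (mu G p y) ≤
      W1 G (mu G (t + (1 - t) * p) x) (mu G (t + (1 - t) * p) y) := by
  have hx := deg_pos_of_adj hxy
  have h0 : 0 ≤ p := (div_nonneg (sub_nonneg.2 h1) (Nat.cast_nonneg _)).trans hp
  set q := t + (1 - t) * p with hq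
  have q0 : 0 ≤ q := by nlinarith
  have q1 : q ≤ 1 := by nlinarith
  have hqt : (1 - q) / deg G x ≤ q - t :=
    calc (1 - q) / deg G x = (1 - t) * ((1 - p) / deg G x) := by rw [hq]; ring
      _ ≤ (1 - t) * p := mul_le_mul_of_nonneg_left hp (sub_nonneg.2 t1)
      _ = q - t := by rw [hq]; ring
  obtain ⟨π, hπ⟩ := exists_isLexOptimal_mu q0 q1 hx (deg_pos_of_adj hxy.symm)
    (distCost G) (edgeWeight x y)
  have hle : t • Pi.single x (Pi.single y 1) ≤ π := fun a b => by
    have hab := hπ.nonneg a b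
    by_cases ha : a = x <;> by_cases hb : b = y
    · subst ha hb
      simpa using hπ.le_apply_of_adj hconn hxy hdeg q1 hqt
    all_goals simpa [ha, hb] using hab
  have hrest := hπ.toIsTransportPlan.sub ((isTransportPlan_single x y).smul t0) hle
  rw [hq, mu_lazier, mu_lazier, add_sub_cancel_left, add_sub_cancel_left] at hrest
  have hW := hrest.mul_W1_le (G := G) (sub_nonneg.2 t1) (mu_le_one h0 h1 hx)
  rw [map_sub, map_smul, transportCost_single, distCost, SimpleGraph.dist_eq_one_iff_adj.2 hxy,
    Nat.cast_one, smul_eq_mul, mul_one, ← hπ.W1_eq (mu_le_one q0 q1 hx)] at hW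
  linarith

end Rerouting

section Curvature

variable {V : Type*} [Fintype V] {G : SimpleGraph V} {x y : V} {p : ℝ}

lemma kappa_lazier {t : ℝ} (hconn : G.Connected) (hxy : G.Adj x y) (hdeg : deg G y ≤ deg G x)
    (h1 : p ≤ 1) (hp : (1 - p) / deg G x ≤ p) (t0 : 0 ≤ t) (t1 : t ≤ 1) :
    kappa G (t + (1 - t) * p) x y = (1 - t) * kappa G p x y := by
  have h0 : 0 ≤ p := (div_nonneg (sub_nonneg.2 h1) (Nat.cast_nonneg _)).trans hp
  have hW := (W1_mu_lazier_le h0 h1 t0 t1 hxy).antisymm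
    (le_W1_mu_lazier hconn hxy hdeg h1 hp t0 t1)
  rw [kappa, kappa, hW]
  ring

lemma kappaLLY_eq_kappa_div (hconn : G.Connected) (hxy : G.Adj x y) (hdeg : deg G y ≤ deg G x)
    (h1 : p < 1) (hp : (1 - p) / deg G x ≤ p) :
    kappaLLY G x y = kappa G p x y / (1 - p) := by
  refine Filter.Tendsto.limUnder_eq (tendsto_const_nhds.congr' ?_)
  filter_upwards [Ioo_mem_nhdsLT h1] with q ⟨hpq, hq1⟩
  have hp1 : 0 < 1 - p := sub_pos.2 h1
  obtain ⟨t, rfl⟩ : ∃ t, q = t + (1 - t) * p :=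
    ⟨(q - p) / (1 - p), by field_simp; ring⟩
  have t0 : 0 ≤ t := by nlinarith
  have t1 : t < 1 := by nlinarith
  rw [kappa_lazier hconn hxy hdeg h1.le hp t0 t1.le,
    show 1 - (t + (1 - t) * p) = (1 - t) * (1 - p) by ring,
    mul_div_mul_left _ _ (sub_pos.2 t1).ne']

theorem kappa_eq_one_sub_mul_kappaLLY (hconn : G.Connected) (hxy : G.Adj x y)
    (hp : p ∈ Set.Icc (1 / ((max (deg G x) (deg G y) : ℝ) + 1)) 1) :
    kappa G p x y = (1 - p) * kappaLLY G x y := by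
  wlog hdeg : deg G y ≤ deg G x generalizing x y
  · rw [kappa_comm, kappaLLY_comm]
    exact this hxy.symm (max_comm (deg G x : ℝ) _ ▸ hp) (le_of_not_ge hdeg)
  obtain ⟨hp0, hp1⟩ := hp
  have hx : (0 : ℝ) < deg G x := mod_cast deg_pos_of_adj hxy
  have hstay : (1 - p) / deg G x ≤ p := by
    rw [max_eq_left (mod_cast hdeg), div_le_iff₀ (by positivity)] at hp0
    rw [div_le_iff₀ hx]
    linarith
  rcases hp1.eq_or_lt with rfl | hlt
  · simpa using kappa_lazier hconn hxy hdeg le_rfl hstay zero_le_one le_rfl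
  · rw [kappaLLY_eq_kappa_div hconn hxy hdeg hlt hstay, mul_div_cancel₀ _ (sub_pos.2 hlt).ne']

lemma sInf_kappaLLY_le (hxy : G.Adj x y) :
    sInf {r : ℝ | ∃ x y, G.Adj x y ∧ r = kappaLLY G x y} ≤ kappaLLY G x y := by
  refine csInf_le (Set.Finite.bddBelow ?_) ⟨x, y, hxy, rfl⟩
  refine (Set.finite_range fun e : V × V => kappaLLY G e.1 e.2).subset ?_
  rintro _ ⟨a, b, -, rfl⟩
  exact ⟨(a, b), rfl⟩

end Curvature

theorem stmt5_general {V : Type*} [Fintype V] {G : SimpleGraph V} (hconn : G.Connected)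
    {x y : V} (hxy : G.Adj x y) {p : ℝ}
    (hp : p ∈ Set.Icc (1 / ((max (deg G x) (deg G y) : ℝ) + 1)) 1) :
    W1 G (mu G p x) (mu G p y) ≤
      1 - (1 - p) * sInf {r : ℝ | ∃ x y, G.Adj x y ∧ r = kappaLLY G x y} := by
  have hkappa : 1 - W1 G (mu G p x) (mu G p y) = (1 - p) * kappaLLY G x y :=
    kappa_eq_one_sub_mul_kappaLLY hconn hxy hp
  have hinf := mul_le_mul_of_nonneg_left (sInf_kappaLLY_le hxy) (sub_nonneg.2 hp.2)
  linarith

/-- In a Bonnet-Myers sharp graph of diameter 2, for any edge `x ∼ y` and any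
idleness `p ∈ [1/(max(d_x,d_y)+1), 1]` we have `W₁(μ_x^p, μ_y^p) ≤ p`. -/
theorem stmt5 {V : Type*} [Fintype V] (G : SimpleGraph V) (hconn : G.Connected)
    (hdiam : diam G = 2) (hBM : BMSharp G) (x y : V) (hxy : G.Adj x y)
    (p : ℝ) (hp : p ∈ Set.Icc (1 / ((max (deg G x) (deg G y) : ℝ) + 1)) 1) :
    W1 G (mu G p x) (mu G p y) ≤ p := by
  rw [BMSharp, hdiam] at hBM
  simpa [hBM] using stmt5_general hconn hxy hp
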